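/- Let n be a positive natural number and let G be an antisymmetric n×n real matrix. The 2n×2n block matrix A = [[0, I], [-I, G]] is invertible, with inverse A⁻¹ = [[G, -I], [I, 0]]. Moreover, for any symmetric n×n real matrix S and any scalar c ∈ ℝ, the 2n×2n block matrix J = [[I, 0], [-c·S, I]] (the Jacobian of the exact position sub-flow (θ, p) ↦ (θ, p - c·∇U(θ)) when S is the Hessian of U) is symplectic with respect to A: Jᵀ · A⁻¹ · J = A⁻¹. -/

import Mathlib

open Matrix

section NonAssocRing

variable {l R : Type*} [DecidableEq l] [NonAssocRing R]

/-- The structure matrix `[[0, I], [-I, G]]` of magnetic Hamiltonian dynamics, for an arbitrary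
square block `G`. Rows and columns are indexed by `l ⊕ l`, positions first and momenta second. -/
def magneticStructure (G : Matrix l l R) : Matrix (l ⊕ l) (l ⊕ l) R :=
  fromBlocks 0 1 (-1) G

/-- The Jacobian `[[I, 0], [-T, I]]` of a position sub-flow `(θ, p) ↦ (θ, p - f θ)`, where `T` is
the derivative of `f` at `θ`. For a step of size `c` along the gradient of a potential,
`T` is `c` times its Hessian. -/
def positionSubflowJacobian (T : Matrix l l R) : Matrix (l ⊕ l) (l ⊕ l) R :=
  fromBlocks 1 0 (-T) 1

variable [Fintype l]

theorem magneticStructure_mul_fromBlocks (G : Matrix l l R) :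
    magneticStructure G * fromBlocks G (-1) 1 0 = 1 := by
  simp [magneticStructure, fromBlocks_multiply]

theorem transpose_positionSubflowJacobian_mul_fromBlocks_mul (G T : Matrix l l R) :
    (positionSubflowJacobian T)ᵀ * fromBlocks G (-1) 1 0 * positionSubflowJacobian T =
      fromBlocks (G + (T - Tᵀ)) (-1) 1 0 := by
  calc (positionSubflowJacobian T)ᵀ * fromBlocks G (-1) 1 0 * positionSubflowJacobian T
      = fromBlocks (G - Tᵀ) (-1) 1 0 * positionSubflowJacobian T := by
        simp [positionSubflowJacobian, fromBlocks_transpose, fromBlocks_multiply, sub_eq_add_neg]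
    _ = fromBlocks (G - Tᵀ + T) (-1) 1 0 := by
        simp [positionSubflowJacobian, fromBlocks_multiply]
    _ = fromBlocks (G + (T - Tᵀ)) (-1) 1 0 := by
        rw [sub_add_eq_add_sub, add_sub_assoc]

end NonAssocRing

section CommRing

variable {l R : Type*} [DecidableEq l] [Fintype l] [CommRing R]

theorem isUnit_det_magneticStructure (G : Matrix l l R) : IsUnit (magneticStructure G).det :=
  isUnit_det_of_right_inverse (magneticStructure_mul_fromBlocks G)

theorem magneticStructure_inv (G : Matrix l l R) :
    (magneticStructure G)⁻¹ = fromBlocks G (-1) 1 0 :=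
  inv_eq_right_inv (magneticStructure_mul_fromBlocks G)

theorem positionSubflowJacobian_symplectic_iff (G T : Matrix l l R) :
    (positionSubflowJacobian T)ᵀ * (magneticStructure G)⁻¹ * positionSubflowJacobian T =
      (magneticStructure G)⁻¹ ↔ T.IsSymm := by
  rw [magneticStructure_inv, transpose_positionSubflowJacobian_mul_fromBlocks_mul]
  calc fromBlocks (G + (T - Tᵀ)) (-1) 1 0 = fromBlocks G (-1) 1 0
      ↔ G + (T - Tᵀ) = G := by simp only [fromBlocks_inj, and_true]
    _ ↔ T = Tᵀ := by rw [add_eq_left, sub_eq_zero]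
    _ ↔ T.IsSymm := eq_comm

theorem magnetic_structure_inverse_and_position_subflow_symplectic_general (G : Matrix l l R) :
    IsUnit (magneticStructure G).det ∧
    (magneticStructure G)⁻¹ = fromBlocks G (-1) 1 0 ∧
    ∀ T : Matrix l l R,
      (positionSubflowJacobian T)ᵀ * (magneticStructure G)⁻¹ * positionSubflowJacobian T =
        (magneticStructure G)⁻¹ ↔ T.IsSymm :=
  ⟨isUnit_det_magneticStructure G, magneticStructure_inv G,
    positionSubflowJacobian_symplectic_iff G⟩

end CommRing

/-- The magnetic HMC structure matrix `A = [[0, I], [-I, G]]` is invertible with inverse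
`[[G, -I], [I, 0]]`, and the Jacobian `[[I, 0], [-c S, I]]` of the exact position sub-flow
(with `S` symmetric) is symplectic with respect to `A`. -/
theorem magnetic_structure_inverse_and_position_subflow_symplectic
    (n : ℕ) (hn : 0 < n)
    (G : Matrix (Fin n) (Fin n) ℝ) (hG : Gᵀ = -G)
    (A : Matrix (Fin n ⊕ Fin n) (Fin n ⊕ Fin n) ℝ)
    (hA : A = Matrix.fromBlocks 0 1 (-1) G) :
    IsUnit A.det ∧
    A⁻¹ = Matrix.fromBlocks G (-1) 1 0 ∧
    ∀ (S : Matrix (Fin n) (Fin n) ℝ) (c : ℝ), Sᵀ = S →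
      (Matrix.fromBlocks 1 0 (-(c • S)) 1)ᵀ * A⁻¹ * Matrix.fromBlocks 1 0 (-(c • S)) 1
        = A⁻¹ := by
  subst hA
  obtain ⟨hunit, hinv, hsymp⟩ :=
    magnetic_structure_inverse_and_position_subflow_symplectic_general G
  exact ⟨hunit, hinv, fun S c hS => (hsymp (c • S)).mpr (IsSymm.smul hS c)⟩
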